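/- Key estimate for the universal uncertainty relation (pure-state form): for any bounded self-adjoint operators N and B on a complex Hilbert space H and any unit vector ψ ∈ H, |⟨ψ, (N∘B − B∘N)ψ⟩| ≤ 2·‖Nψ‖·σ(B;ψ). -/

import Mathlib

open ContinuousLinearMap

/-- The standard deviation of a bounded operator `B` in the vector state `ψ`:
`σ(B;ψ)² = ‖Bψ‖² − (re⟨ψ, Bψ⟩)²`. -/
noncomputable def stddev {H : Type*} [NormedAddCommGroup H] [InnerProductSpace ℂ H]
    (B : H →L[ℂ] H) (ψ : H) : ℝ :=
  Real.sqrt (‖B ψ‖ ^ 2 - (Complex.re (inner ℂ ψ (B ψ))) ^ 2)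

/-- Key estimate for the universal uncertainty relation (pure-state form). -/
theorem commutator_bound {H : Type*} [NormedAddCommGroup H] [InnerProductSpace ℂ H]
    [CompleteSpace H] (N B : H →L[ℂ] H) (hN : IsSelfAdjoint N) (hB : IsSelfAdjoint B)
    (ψ : H) (hψ : ‖ψ‖ = 1) :
    ‖inner ℂ ψ ((N ∘L B - B ∘L N) ψ)‖ ≤ 2 * ‖N ψ‖ * stddev B ψ := by
  have hNs : ∀ x y : H, inner ℂ (N x) y = inner ℂ x (N y) := hN.isSymmetric
  have hBs : ∀ x y : H, inner ℂ (B x) y = inner ℂ x (B y) := hB.isSymmetric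
  obtain ⟨b, hb⟩ : ∃ b : ℝ, b = Complex.re (inner ℂ ψ (B ψ)) := ⟨_, rfl⟩
  obtain ⟨v, hv⟩ : ∃ v : H, v = B ψ - (b : ℂ) • ψ := ⟨_, rfl⟩
  have hsd : stddev B ψ = ‖v‖ := by
    have h : ‖v‖ ^ 2 = ‖B ψ‖ ^ 2 - b ^ 2 := by
      have h2 : Complex.re (inner ℂ (B ψ) ((b : ℂ) • ψ)) = b * b := by
        rw [inner_smul_right, hBs, Complex.re_ofReal_mul, ← hb]
      have h1 := @norm_sub_sq ℂ H _ _ _ (B ψ) ((b : ℂ) • ψ)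
      rw [← hv, norm_smul, hψ, mul_one, Complex.norm_real, Real.norm_eq_abs, sq_abs] at h1
      rw [h1]
      change ‖B ψ‖ ^ 2 - 2 * Complex.re (inner ℂ (B ψ) ((b : ℂ) • ψ)) + b ^ 2 = _
      rw [h2]
      ring
    unfold stddev
    rw [← hb, ← h, Real.sqrt_sq (norm_nonneg _)]
  have key : inner ℂ ψ ((N ∘L B - B ∘L N) ψ) = inner ℂ (N ψ) v - inner ℂ v (N ψ) := by
    simp only [hv, map_sub, map_smul, _root_.sub_apply, ContinuousLinearMap.comp_apply, inner_sub_right,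
      inner_sub_left, inner_smul_left, inner_smul_right, Complex.conj_ofReal, hNs, hBs]
    ring
  rw [key, hsd]
  have h1 : ‖inner ℂ (N ψ) v‖ ≤ ‖N ψ‖ * ‖v‖ := norm_inner_le_norm _ _
  have h2 : ‖inner ℂ v (N ψ)‖ ≤ ‖v‖ * ‖N ψ‖ := norm_inner_le_norm _ _
  have h3 := norm_sub_le (inner ℂ (N ψ) v) (inner ℂ v (N ψ))
  linarith
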